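/- arXiv:1909.12225 — 4 statements merged into one kernel-verified Lean document; each statement's English description precedes it below -/
import Mathlib

section
/- Let X be a compact metric space, μ a finite Borel measure on X, n ≥ 1 an integer, and r > 0. Assume that the function (x,t) ↦ μ(B(x,t)) is continuous on X × (0, r], where B(x,t) is the closed metric ball. Assume that for every x ∈ X there exists t ∈ (0, r] with μ(B(x,t)) < 2·t^n/n!. Then there exist τ ∈ (0, r] and ε > 0 such that for every x ∈ X there exists t ∈ [τ, r] with μ(B(x,t)) < (2·t^n/n!)·(1 − ε). -/
/-!
For fixed `t`, the strict inequality at a point `x` leaves some slack `ε`, and by continuity of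
`y ↦ μ (closedBall y t)` it persists, with the same `t` and `ε`, for all `y` near `x`. So the
conclusion, with `τ = t`, holds uniformly on a neighbourhood of each point. Since it is inherited by
subsets and by finite unions (take the minima of the `τ`s and of the `ε`s), compactness makes it
hold uniformly on all of `X`.
-/

open Metric Set MeasureTheory
open scoped ENNReal

/-- Let `X` be a compact metric space, `μ` a finite Borel measure, `n ≥ 1`, `r > 0`.
Suppose `(x,t) ↦ μ(B(x,t))` is continuous on `X × (0,r]`, and for every `x` there is
`t ∈ (0,r]` with `μ(B(x,t)) < 2·t^n/n!`. Then there exist `τ ∈ (0,r]` and `ε > 0` such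
that for every `x` there is `t ∈ [τ,r]` with `μ(B(x,t)) < (2·t^n/n!)·(1−ε)`. -/
theorem stmt13 {X : Type*} [MetricSpace X] [CompactSpace X]
    [MeasurableSpace X] [BorelSpace X] (μ : Measure X) [IsFiniteMeasure μ]
    (n : ℕ) (hn : 1 ≤ n) (r : ℝ) (hr : 0 < r)
    (hcont : ContinuousOn (fun p : X × ℝ => μ (Metric.closedBall p.1 p.2))
      ((Set.univ : Set X) ×ˢ Set.Ioc 0 r))
    (hsmall : ∀ x : X, ∃ t ∈ Set.Ioc (0 : ℝ) r,
      μ (Metric.closedBall x t) < ENNReal.ofReal (2 * t ^ n / (n.factorial : ℝ))) :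
    ∃ τ ∈ Set.Ioc (0 : ℝ) r, ∃ ε : ℝ, 0 < ε ∧ ∀ x : X, ∃ t ∈ Set.Icc τ r,
      μ (Metric.closedBall x t) <
        ENNReal.ofReal (2 * t ^ n / (n.factorial : ℝ) * (1 - ε)) := by
  have key : ∃ τ ∈ Set.Ioc (0 : ℝ) r, ∃ ε : ℝ, 0 < ε ∧ ∀ x ∈ (Set.univ : Set X),
      ∃ t ∈ Set.Icc τ r, μ (Metric.closedBall x t) <
        ENNReal.ofReal (2 * t ^ n / (n.factorial : ℝ) * (1 - ε)) := by
    refine isCompact_univ.induction_on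
      (p := fun s : Set X => ∃ τ ∈ Set.Ioc (0 : ℝ) r, ∃ ε : ℝ, 0 < ε ∧ ∀ x ∈ s,
        ∃ t ∈ Set.Icc τ r, μ (Metric.closedBall x t) <
          ENNReal.ofReal (2 * t ^ n / (n.factorial : ℝ) * (1 - ε))) ?_ ?_ ?_ ?_
    · exact ⟨r, ⟨hr, le_rfl⟩, 1, one_pos, by simp⟩
    · rintro s s' hss ⟨τ, hτ, ε, hε, h⟩
      exact ⟨τ, hτ, ε, hε, fun x hx => h x (hss hx)⟩
    · rintro s s' ⟨τ, hτ, ε, hε, h⟩ ⟨τ', hτ', ε', hε', h'⟩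
      -- Shrinking `ε` only weakens the inequality, since `2 * t ^ n / n! ≥ 0`.
      have weaken : ∀ (x : X) (t δ δ' : ℝ), 0 < t → δ ≤ δ' →
          μ (Metric.closedBall x t) <
            ENNReal.ofReal (2 * t ^ n / (n.factorial : ℝ) * (1 - δ')) →
          μ (Metric.closedBall x t) <
            ENNReal.ofReal (2 * t ^ n / (n.factorial : ℝ) * (1 - δ)) := by
        intro x t δ δ' ht hδ hlt
        exact hlt.trans_le (ENNReal.ofReal_le_ofReal
          (mul_le_mul_of_nonneg_left (by linarith) (by positivity)))
      refine ⟨min τ τ', ⟨lt_min hτ.1 hτ'.1, (min_le_left _ _).trans hτ.2⟩,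
        min ε ε', lt_min hε hε', ?_⟩
      rintro x (hx | hx)
      · obtain ⟨t, ht, hlt⟩ := h x hx
        exact ⟨t, ⟨(min_le_left _ _).trans ht.1, ht.2⟩,
          weaken x t _ _ (hτ.1.trans_le ht.1) (min_le_left _ _) hlt⟩
      · obtain ⟨t, ht, hlt⟩ := h' x hx
        exact ⟨t, ⟨(min_le_right _ _).trans ht.1, ht.2⟩,
          weaken x t _ _ (hτ'.1.trans_le ht.1) (min_le_right _ _) hlt⟩
    · intro x _
      obtain ⟨t, ht, hlt⟩ := hsmall x
      have hslack : Continuous fun ε : ℝ =>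
          ENNReal.ofReal (2 * t ^ n / (n.factorial : ℝ) * (1 - ε)) :=
        ENNReal.continuous_ofReal.comp (by fun_prop)
      have hev : ∀ᶠ ε in nhdsWithin (0 : ℝ) (Set.Ioi 0), μ (Metric.closedBall x t) <
          ENNReal.ofReal (2 * t ^ n / (n.factorial : ℝ) * (1 - ε)) :=
        nhdsWithin_le_nhds (hslack.continuousAt.eventually (lt_mem_nhds (by simpa using hlt)))
      obtain ⟨ε, hεlt, hε⟩ := (hev.and self_mem_nhdsWithin).exists
      have hball : Continuous fun y : X => μ (Metric.closedBall y t) :=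
        hcont.comp_continuous (f := fun y : X => (y, t)) (by fun_prop)
          fun y => ⟨Set.mem_univ y, ht⟩
      refine ⟨{y | μ (Metric.closedBall y t) <
        ENNReal.ofReal (2 * t ^ n / (n.factorial : ℝ) * (1 - ε))},
        nhdsWithin_le_nhds (hball.continuousAt.eventually (gt_mem_nhds hεlt)),
        t, ht, ε, hε, fun y hy => ⟨t, ⟨le_rfl, ht.2⟩, hy⟩⟩
  obtain ⟨τ, hτ, ε, hε, h⟩ := key
  exact ⟨τ, hτ, ε, hε, fun x => h x (Set.mem_univ x)⟩
end

section
/- Let X be a metric space with the property that for every pair of points x, y ∈ X and every η > 0 there exists a continuous path from x to y of length at most d(x,y) + η. Let p ∈ X, s > 0, and δ > 0. Assume that every closed rectifiable curve in X of length less than 2s + 2δ is null-homotopic in X. Then every closed rectifiable curve whose image is contained in the closed metric ball B(p, s) is null-homotopic in X. -/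
open Metric Set unitInterval
open scoped ENNReal

/-!
Join `p` to every point `y` of the ball by a "spoke" of length at most `s + δ / 4`. If a subarc of
the loop `γ` from `γ t` to `γ u` has length less than `δ`, then the triangle formed by the spoke to
`γ t`, the subarc and the spoke back from `γ u` has length less than `2 s + 2 δ`, so it is
null-homotopic (`spoke_trans_subpath`).

Since `γ` is continuous and rectifiable, its length over `[t, u]` tends to `0` as `u → t` or
`t → u`. Hence the homotopy class of "spoke to `γ t`, then back along `γ` to `γ 0`", an element of
a set of classes that does not depend on `t`, is locally constant in `t`. By connectedness of
`[0, 1]` its values at `0` and `1` agree: the spoke to the base point is homotopic to itself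
followed by the reverse of `γ`, and cancelling the spoke shows that `γ` is null-homotopic. Working
with local constancy takes the place of choosing a partition of `[0, 1]`.
-/

open Filter Topology Path

lemma eVariationOn_path_trans_le {X : Type*} [PseudoEMetricSpace X] {a b c : X}
    (f : Path a b) (g : Path b c) :
    eVariationOn (fun t => f.trans g t) univ ≤
      eVariationOn (fun t => f t) univ + eVariationOn (fun t => g t) univ := by
  let h : I := ⟨1 / 2, by norm_num, by norm_num⟩
  have hmono : Monotone (projIcc (0 : ℝ) 1 zero_le_one) := monotone_projIcc _
  have hsplit := eVariationOn.union (fun t => f.trans g t) (isGreatest_Iic (a := h)) isLeast_Ici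
  rw [Iic_union_Ici] at hsplit
  rw [hsplit]
  gcongr
  · have : EqOn (fun t => f.trans g t)
        ((fun t => f t) ∘ fun t : I => projIcc (0 : ℝ) 1 zero_le_one (2 * t)) (Iic h) := by
      intro t ht
      have ht' : (t : ℝ) ≤ 1 / 2 := ht
      simp only [Path.trans_apply, dif_pos ht', Function.comp_apply]
      rw [projIcc_of_mem]
    rw [eVariationOn.congr this]
    refine eVariationOn.comp_le_of_monotoneOn _ _ (fun t _ u _ htu => hmono ?_)
      (mapsTo_univ _ _)
    have : (t : ℝ) ≤ u := htu
    linarith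
  · have : EqOn (fun t => f.trans g t)
        ((fun t => g t) ∘ fun t : I => projIcc (0 : ℝ) 1 zero_le_one (2 * t - 1)) (Ici h) := by
      intro t ht
      have ht' : 1 / 2 ≤ (t : ℝ) := ht
      rcases ht'.eq_or_lt with heq | hlt
      · simp [Path.trans_apply, ← heq]
      · simp only [Path.trans_apply, dif_neg (not_le.2 hlt), Function.comp_apply]
        rw [projIcc_of_mem]
    rw [eVariationOn.congr this]
    refine eVariationOn.comp_le_of_monotoneOn _ _ (fun t _ u _ htu => hmono ?_)
      (mapsTo_univ _ _)
    have : (t : ℝ) ≤ u := htu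
    linarith

lemma eVariationOn_path_symm_le {X : Type*} [PseudoEMetricSpace X] {a b : X} (f : Path a b) :
    eVariationOn (fun t => f.symm t) univ ≤ eVariationOn (fun t => f t) univ :=
  eVariationOn.comp_le_of_antitoneOn (fun t => f t) unitInterval.symm
    (fun t _ u _ htu => by
      have : (t : ℝ) ≤ u := htu
      rw [← Subtype.coe_le_coe, coe_symm_eq, coe_symm_eq]
      linarith) (mapsTo_univ _ _)

lemma eVariationOn_subpath_le {X : Type*} [PseudoEMetricSpace X] {a b : X} (f : Path a b)
    {t u : I} (htu : t ≤ u) :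
    eVariationOn (fun v => f.subpath t u v) univ ≤ eVariationOn (fun v => f v) (Icc t u) :=
  eVariationOn.comp_le_of_monotoneOn (fun v => f v) (Icc.convexComb t u)
    (fun v _ w _ hvw => by
      have h₁ : (v : ℝ) ≤ w := hvw
      have h₂ : (t : ℝ) ≤ u := htu
      rw [← Subtype.coe_le_coe, Icc.coe_convexComb, Icc.coe_convexComb]
      nlinarith)
    (fun v _ => ⟨Icc.le_convexComb htu v, Icc.convexComb_le htu v⟩)

/-- A thin triangle, formed by two spokes from `p` and a short subarc of `γ`, is null-homotopic:
one spoke followed by the subarc is homotopic to the other spoke. -/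
lemma spoke_trans_subpath {X : Type*} [MetricSpace X] {p x y : X} {s δ : ℝ} (hs : 0 < s)
    (hδ : 0 < δ)
    (hnull : ∀ (x : X) (γ : Path x x),
      eVariationOn (fun t => γ t) (univ : Set I) < ENNReal.ofReal (2 * s + 2 * δ) →
      γ.Homotopic (Path.refl x))
    (γ : Path x y) {t u : I} (htu : t ≤ u)
    (hγ : eVariationOn (fun v => γ v) (Icc t u) < ENNReal.ofReal δ)
    (q : Path p (γ t)) (hq : eVariationOn (fun v => q v) univ ≤ ENNReal.ofReal (s + δ / 4))
    (r : Path p (γ u)) (hr : eVariationOn (fun v => r v) univ ≤ ENNReal.ofReal (s + δ / 4)) :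
    (Homotopic.Quotient.mk q).trans (Homotopic.Quotient.mk (γ.subpath t u)) = Homotopic.Quotient.mk r := by
  have hlen : eVariationOn (fun v => (q.trans (γ.subpath t u)).trans r.symm v) univ <
      ENNReal.ofReal (2 * s + 2 * δ) := by
    calc _ ≤ (ENNReal.ofReal (s + δ / 4) + ENNReal.ofReal δ) + ENNReal.ofReal (s + δ / 4) := by
          refine (eVariationOn_path_trans_le _ _).trans (add_le_add ?_ ?_)
          · exact (eVariationOn_path_trans_le _ _).trans
              (add_le_add hq ((eVariationOn_subpath_le γ htu).trans hγ.le))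
          · exact (eVariationOn_path_symm_le r).trans hr
      _ < ENNReal.ofReal (2 * s + 2 * δ) := by
          rw [← ENNReal.ofReal_add (by positivity) (by positivity),
            ← ENNReal.ofReal_add (by positivity) (by positivity)]
          exact (ENNReal.ofReal_lt_ofReal_iff (by positivity)).2 (by linarith)
  have h := Homotopic.Quotient.eq.2 (hnull p _ hlen)
  rw [Homotopic.Quotient.mk_trans, Homotopic.Quotient.mk_trans, Homotopic.Quotient.mk_symm, Homotopic.Quotient.mk_refl] at h
  have h' := congrArg (fun z => z.trans (Homotopic.Quotient.mk r)) h
  simpa [Homotopic.Quotient.trans_assoc] using h'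

/-- Let `X` be a metric space in which any two points `x, y` can be joined, for every
`η > 0`, by a continuous path of length at most `dist x y + η` (length = total variation).
Let `p ∈ X`, `s > 0`, `δ > 0`. If every closed rectifiable curve in `X` of length less
than `2s + 2δ` is null-homotopic, then every closed rectifiable curve whose image lies in
the closed ball `B(p, s)` is null-homotopic. -/
theorem stmt14 {X : Type*} [MetricSpace X]
    (hpath : ∀ (x y : X) (η : ℝ), 0 < η → ∃ γ : Path x y,
      eVariationOn (fun t => γ t) (Set.univ : Set unitInterval) ≤
        ENNReal.ofReal (dist x y + η))
    (p : X) (s δ : ℝ) (hs : 0 < s) (hδ : 0 < δ)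
    (hnull : ∀ (x : X) (γ : Path x x),
      eVariationOn (fun t => γ t) (Set.univ : Set unitInterval) <
        ENNReal.ofReal (2 * s + 2 * δ) →
      γ.Homotopic (Path.refl x)) :
    ∀ (x : X) (γ : Path x x),
      eVariationOn (fun t => γ t) (Set.univ : Set unitInterval) ≠ ⊤ →
      (∀ t : unitInterval, γ t ∈ Metric.closedBall p s) →
      γ.Homotopic (Path.refl x) := by
  intro x γ hγ hball
  have hspoke : ∀ y : X, ∃ q : Path p y, y ∈ closedBall p s →
      eVariationOn (fun t => q t) (univ : Set I) ≤ ENNReal.ofReal (s + δ / 4) := by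
    intro y
    obtain ⟨q, hq⟩ := hpath p y (δ / 4) (by positivity)
    refine ⟨q, fun hy => hq.trans (ENNReal.ofReal_le_ofReal ?_)⟩
    have := mem_closedBall'.1 hy
    linarith
  choose q hq using hspoke
  have hlink : ∀ t u : I, t ≤ u →
      eVariationOn (fun v => γ v) (Icc t u) < ENNReal.ofReal δ →
      (Homotopic.Quotient.mk (q (γ t))).trans (Homotopic.Quotient.mk (γ.subpath t u)) = Homotopic.Quotient.mk (q (γ u)) :=
    fun t u htu h => spoke_trans_subpath hs hδ hnull γ htu h _ (hq _ (hball t)) _ (hq _ (hball u))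
  have hsub : ∀ t u v : I, (Homotopic.Quotient.mk (γ.subpath t u)).trans (Homotopic.Quotient.mk (γ.subpath u v)) =
      Homotopic.Quotient.mk (γ.subpath t v) := fun t u v => by
    rw [← Homotopic.Quotient.mk_trans]
    exact Homotopic.Quotient.eq.2 ⟨Path.Homotopy.subpathTransSubpath γ t u v⟩
  let F : I → Path.Homotopic.Quotient p (γ 0) := fun t =>
    (Homotopic.Quotient.mk (q (γ t))).trans (Homotopic.Quotient.mk (γ.subpath t 0))
  have hF : ∀ t u : I, t ≤ u → eVariationOn (fun v => γ v) (Icc t u) < ENNReal.ofReal δ →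
      F t = F u := by
    intro t u htu h
    simp only [F]
    rw [← hlink t u htu h, Homotopic.Quotient.trans_assoc, hsub]
  have hδ' : (0 : ℝ≥0∞) < ENNReal.ofReal δ := ENNReal.ofReal_pos.2 hδ
  have hbv : BoundedVariationOn (fun v => γ v) (univ : Set I) := hγ
  have hloc : IsLocallyConstant F := by
    rw [IsLocallyConstant.iff_eventually_eq]
    intro t
    have hl := hbv.tendsto_eVariationOn_Icc_zero_left (x := t)
      γ.continuous.continuousWithinAt
    have hr := hbv.tendsto_eVariationOn_Icc_zero_right t γ.continuous.continuousWithinAt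
    simp only [univ_inter, nhdsWithin_univ] at hl hr
    filter_upwards [hl.eventually_lt_const hδ', hr.eventually_lt_const hδ'] with u hu₁ hu₂
    rcases le_total u t with h | h
    · exact hF u t h hu₁
    · exact (hF t u h hu₂).symm
  have key := hloc.apply_eq_of_preconnectedSpace 0 1
  simp only [F, ← γ.symm_subpath 0 1, γ.subpath_self, γ.subpath_zero_one] at key
  -- Generalizing the endpoints `γ 0` and `γ 1` lets both be replaced by `x`.
  have hend : ∀ (a b : X) (ha : a = x) (hb : b = x),
      (Homotopic.Quotient.mk (q a)).trans (Homotopic.Quotient.mk (Path.refl a)) =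
        (Homotopic.Quotient.mk (q b)).trans (Homotopic.Quotient.mk (γ.cast ha hb).symm) →
      γ.Homotopic (Path.refl x) := by
    rintro a b rfl rfl h
    rw [Homotopic.Quotient.mk_refl, Homotopic.Quotient.trans_refl, Path.cast_rfl_rfl, Homotopic.Quotient.mk_symm] at h
    have h' := congrArg (fun z => (Homotopic.Quotient.mk (q b)).symm.trans (z.trans (Homotopic.Quotient.mk γ))) h
    simp only [Homotopic.Quotient.trans_assoc, Homotopic.Quotient.symm_trans, Homotopic.Quotient.trans_refl] at h'
    rw [← Homotopic.Quotient.trans_assoc, Homotopic.Quotient.symm_trans, Homotopic.Quotient.refl_trans] at h'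
    exact Homotopic.Quotient.eq.1 h'
  exact hend _ _ γ.source γ.target key
end

section
/- Let X be a metric space, Z a compact subset of X, n ≥ 1 an integer, and δ > 0. Let V₁, …, V_k be finitely many sets, each open in Z, which cover Z, such that no n+1 of them have a common point, and such that each V_i is contained in a closed metric ball of X of radius r_i. Then there exist open subsets U₁, …, U_k of X such that U_i ⊇ V_i' for a closed shrinking covering Z (in particular U₁, …, U_k cover Z), each U_i is contained in a closed metric ball of X of radius r_i + δ, and no n+1 of the sets U₁, …, U_k have a common point. -/
/-!
The sets `U i = {x | infEDist x Z < infEDist x (Z \ V i)} ∩ thickening δ (V i)` work. They are open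
because distance functions are continuous, and contain `V i` because `Z \ V i` is closed. For the
multiplicity bound, given any `x`, let `z` be a point of the compact set `Z` nearest to `x`; if
`x ∈ U i`, then `z` is strictly closer to `x` than every point of `Z \ V i`, so `z ∈ V i`. Hence the
indices of the `U i` containing `x` are among those of the `V i` containing `z`.
-/

open Metric Set
open scoped ENNReal

/-- Covering-expansion step: let `Z` be a compact subset of a metric space `X`, `n ≥ 1`,
`δ > 0`, and let `V₁, …, V_k` be finitely many sets, open in `Z`, covering `Z`, with
multiplicity at most `n`, such that each `V i` lies in a closed ball of radius `rad i`.
Then there are open subsets `U₁, …, U_k` of `X` covering `Z`, each `U i` contained in a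
closed ball of radius `rad i + δ`, with multiplicity at most `n`. -/
theorem stmt15 {X : Type*} [MetricSpace X] (Z : Set X) (hZ : IsCompact Z)
    (n : ℕ) (hn : 1 ≤ n) (δ : ℝ) (hδ : 0 < δ)
    (k : ℕ) (V : Fin k → Set X) (rad : Fin k → ℝ)
    (hopen : ∀ i, ∃ W : Set X, IsOpen W ∧ V i = W ∩ Z)
    (hcover : Z ⊆ ⋃ i, V i)
    (hmult : ∀ x : X, {i | x ∈ V i}.encard ≤ n)
    (hrad : ∀ i, ∃ c : X, V i ⊆ Metric.closedBall c (rad i)) :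
    ∃ U : Fin k → Set X, (∀ i, IsOpen (U i)) ∧ Z ⊆ ⋃ i, U i ∧
      (∀ i, ∃ c : X, U i ⊆ Metric.closedBall c (rad i + δ)) ∧
      (∀ x : X, {i | x ∈ U i}.encard ≤ n) := by
  refine ⟨fun i => {x | infEDist x Z < infEDist x (Z \ V i)} ∩ thickening δ (V i),
    fun i => ?_, fun x hx => ?_, fun i => ?_, fun x => ?_⟩
  · exact (isOpen_lt continuous_infEDist continuous_infEDist).inter isOpen_thickening
  · obtain ⟨i, hi⟩ := mem_iUnion.1 (hcover hx)
    refine mem_iUnion.2 ⟨i, ?_, self_subset_thickening hδ _ hi⟩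
    have hclosed : IsClosed (Z \ V i) := by
      obtain ⟨W, hW, hV⟩ := hopen i
      rw [hV, sdiff_inter_self_eq_sdiff]
      exact hZ.isClosed.sdiff hW
    rw [mem_ofPred_eq, infEDist_zero_of_mem hx, pos_iff_ne_zero]
    intro h
    exact ((mem_iff_infEDist_zero_of_closed hclosed).2 h).2 hi
  · obtain ⟨c, hc⟩ := hrad i
    refine ⟨c, fun x hx => ?_⟩
    obtain ⟨y, hy, hxy⟩ := mem_thickening_iff.1 hx.2
    have hyc := mem_closedBall.1 (hc hy)
    rw [mem_closedBall]
    linarith [dist_triangle x y c]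
  · rcases Z.eq_empty_or_nonempty with rfl | hne
    · -- Both distances are `⊤` here, so every `U i` is empty.
      simp
    · obtain ⟨z, hz, hxz⟩ := hZ.exists_infEDist_eq_edist hne x
      refine (encard_le_encard fun i hi => ?_).trans (hmult z)
      by_contra hzi
      have hlt : infEDist x Z < infEDist x (Z \ V i) := hi.1
      rw [hxz] at hlt
      exact hlt.not_ge (infEDist_le_edist_of_mem ⟨hz, hzi⟩)
end

section
/- Let X be the interval [0,1] with the standard metric, and let Y = A = (0,1]. Then the 1-dimensional Hausdorff content of A in X equals 1/2, while for every s ∈ (0,1) the metric sphere S(0,s) = {y ∈ [0,1] : |y| = s} satisfies HC_0(S(0,s) ∩ Y) = 1 = 2·HC_1(A ∩ Y). Consequently the constant 2 in the coarea inequality for Hausdorff content (which asserts the existence of s ∈ (r₁,r₂) with HC_{m−1}(S_s ∩ Y) ≤ (2/(r₂−r₁))·HC_m(A ∩ Y), here with m = 1, r₁ = 0, r₂ = 1, x = 0) cannot be replaced by any smaller constant. -/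
/-!
A ball of radius `r` in `[0,1]` lies in a real interval of length `2r`, so countable subadditivity
of Lebesgue measure gives `1 = |(0,1]| ≤ 2 ∑ rᵢ` for every admissible cover; the single ball
`B(1/2, 1/2)` attains equality. For `0 < s < 1` the sphere `S(0,s)` is the single point `s`, which
is covered by one ball of radius `0` and by no empty family.
-/

open Metric Set
open scoped ENNReal NNReal

/-- The `m`-dimensional Hausdorff content of a subset `A` of a metric space `X`:
the infimum, over all countable coverings of `A` by closed metric balls of `X` with
radii `r_i`, of `∑ r_i ^ m`. -/
noncomputable def HC {X : Type*} [MetricSpace X] (m : ℝ) (A : Set X) : ℝ≥0∞ :=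
  ⨅ (S : Set (X × ℝ≥0)) (_ : S.Countable)
    (_ : A ⊆ ⋃ p ∈ S, Metric.closedBall p.1 (p.2 : ℝ)),
    ∑' p : S, ((p : X × ℝ≥0).2 : ℝ≥0∞) ^ m


lemma HC_le_of_subset_closedBall {X : Type*} [MetricSpace X] (m : ℝ) {A : Set X} (x : X)
    (r : ℝ≥0) (h : A ⊆ closedBall x (r : ℝ)) : HC m A ≤ (r : ℝ≥0∞) ^ m := by
  refine iInf_le_of_le {(x, r)} (iInf_le_of_le (countable_singleton _) (iInf_le_of_le ?_ ?_))
  · simpa using h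
  · rw [tsum_singleton (x, r) (fun p : X × ℝ≥0 => (p.2 : ℝ≥0∞) ^ m)]

lemma one_le_HC_zero {X : Type*} [MetricSpace X] {A : Set X} (h : A.Nonempty) :
    1 ≤ HC 0 A := by
  refine le_iInf fun S => le_iInf fun _ => le_iInf fun hcov => ?_
  obtain ⟨x, hx⟩ := h
  obtain ⟨p, hp, -⟩ := mem_iUnion₂.1 (hcov hx)
  simpa using ENNReal.le_tsum (f := fun p : S => ((p : X × ℝ≥0).2 : ℝ≥0∞) ^ (0 : ℝ)) ⟨p, hp⟩

lemma HC_one_Ioc : HC 1 ({y : Set.Icc (0 : ℝ) 1 | 0 < (y : ℝ)}) = 2⁻¹ := by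
  apply le_antisymm
  · have h := HC_le_of_subset_closedBall 1 (A := {y : Set.Icc (0 : ℝ) 1 | 0 < (y : ℝ)})
      ⟨1 / 2, by norm_num, by norm_num⟩ 2⁻¹ (fun y _ => by
        have h0 := y.2.1
        have h1 := y.2.2
        rw [mem_closedBall, Subtype.dist_eq, Real.dist_eq, abs_le]
        push_cast
        constructor <;> linarith)
    simpa using h
  · refine le_iInf fun S => le_iInf fun hS => le_iInf fun hcov => ?_
    have : Countable S := hS
    have hsub : Ioc (0 : ℝ) 1 ⊆
        ⋃ p : S, closedBall ((p : Icc (0 : ℝ) 1 × ℝ≥0).1 : ℝ) (p : Icc (0 : ℝ) 1 × ℝ≥0).2 := by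
      intro y hy
      obtain ⟨p, hp, hyp⟩ := mem_iUnion₂.1
        (hcov (show (⟨y, hy.1.le, hy.2⟩ : Icc (0 : ℝ) 1) ∈ _ from hy.1))
      exact mem_iUnion.2 ⟨⟨p, hp⟩, hyp⟩
    have hvol : (1 : ℝ≥0∞) ≤ 2 * ∑' p : S, ((p : Icc (0 : ℝ) 1 × ℝ≥0).2 : ℝ≥0∞) := by
      calc (1 : ℝ≥0∞) = MeasureTheory.volume (Ioc (0 : ℝ) 1) := by simp
        _ ≤ _ := MeasureTheory.measure_mono hsub
        _ ≤ _ := MeasureTheory.measure_iUnion_le _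
        _ = _ := by
          rw [← ENNReal.tsum_mul_left]
          refine tsum_congr fun p => ?_
          rw [Real.volume_closedBall, ENNReal.ofReal_mul (by norm_num)]
          simp
    simp only [ENNReal.rpow_one]
    rw [← one_div]
    exact ENNReal.div_le_of_le_mul' hvol

/-- Optimality of the constant `2` in the coarea inequality for Hausdorff content:
in `X = [0,1]` with the standard metric, the subset `A = Y = (0,1]` has
`HC_1(A) = 1/2`, while for every `s ∈ (0,1)` the metric sphere `S(0,s)` satisfies
`HC_0(S(0,s) ∩ Y) = 1 = 2·HC_1(A ∩ Y)` (here `m = 1`, `r₁ = 0`, `r₂ = 1`, `x = 0`),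
so no constant smaller than `2` works. -/
theorem stmt16 :
    HC 1 ({y : Set.Icc (0 : ℝ) 1 | 0 < (y : ℝ)}) = 2⁻¹ ∧
    (∀ s : ℝ, 0 < s → s < 1 →
      HC 0 ({y : Set.Icc (0 : ℝ) 1 |
          dist y (⟨0, by norm_num⟩ : Set.Icc (0 : ℝ) 1) = s} ∩
        {y : Set.Icc (0 : ℝ) 1 | 0 < (y : ℝ)}) = 1) ∧
    (1 : ℝ≥0∞) = 2 * HC 1 ({y : Set.Icc (0 : ℝ) 1 | 0 < (y : ℝ)}) := by
  refine ⟨HC_one_Ioc, fun s hs0 hs1 => le_antisymm ?_ ?_, ?_⟩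
  · have h := HC_le_of_subset_closedBall 0 (A := {y : Set.Icc (0 : ℝ) 1 |
          dist y (⟨0, by norm_num⟩ : Set.Icc (0 : ℝ) 1) = s} ∩
        {y : Set.Icc (0 : ℝ) 1 | 0 < (y : ℝ)}) ⟨s, hs0.le, hs1.le⟩ 0 (fun y hy => by
        have h1 : dist (y : ℝ) 0 = s := hy.1
        have h2 : 0 < (y : ℝ) := hy.2
        rw [Real.dist_eq, sub_zero, abs_of_pos h2] at h1
        rw [mem_closedBall, Subtype.dist_eq]
        simp [h1])
    -- `0 ^ 0 = 1`: a ball of radius `0` still counts once.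
    simpa using h
  · refine one_le_HC_zero ⟨⟨s, hs0.le, hs1.le⟩, ?_, hs0⟩
    change dist s 0 = s
    rw [Real.dist_eq, sub_zero, abs_of_pos hs0]
  · rw [HC_one_Ioc, ENNReal.mul_inv_cancel (by norm_num) (by norm_num)]
end
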